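/- arXiv:0807.3727 — 2 statements merged into one kernel-verified Lean document; each statement's English description precedes it below -/
import Mathlib

section
/- Let 1 → Z → G → Q → 1 be a central extension with Z ≅ ℤ and Q good (in the sense of Serre) and residually finite, such that the profinite topology of G induces the full profinite topology on Z. Then G is good. -/
/-- The differential of the complex of inhomogeneous cochains of `K` with
coefficients in a `K`-module `A`. -/
def cochainD {K : Type u} [Group K] {A : Type u} [AddCommGroup A]
    [DistribMulAction K A] (n : ℕ) (f : (Fin n → K) → A) : (Fin (n + 1) → K) → A :=
  fun g => g 0 • f (fun i => g i.succ) +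
    ∑ j : Fin (n + 1), ((-1 : ℤ) ^ ((j : ℕ) + 1)) • f (j.contractNth (· * ·) g)

/-- A cochain on `K` factors through the quotient `K/N` if it only depends on the
cosets of its arguments. -/
def FactorsThroughQuotient {K : Type u} [Group K] {A : Type u} (N : Subgroup K)
    {n : ℕ} (f : (Fin n → K) → A) : Prop :=
  ∀ g g' : Fin n → K, (∀ i, (g i)⁻¹ * g' i ∈ N) → f g = f g'

/-- Goodness in the sense of Serre: the natural maps `Hⁿ(Ĝ, A) → Hⁿ(G, A)` are
isomorphisms for every finite `G`-module `A`.  Since the continuous cohomology of the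
profinite completion is the colimit of the cohomology of the finite quotients of `G`,
this says (for each degree `n + 1`; in degree `0` the map is always an isomorphism):
every cocycle of `G` agrees, up to a coboundary, with a cocycle inflated from some
finite quotient `G/N` acting on `A`, and every inflated cocycle which becomes a
coboundary over `G` is already a coboundary over some deeper finite quotient `G/N'`. -/
def IsGood (G : Type u) [Group G] : Prop :=
  ∀ (A : Type u) [AddCommGroup A] [DistribMulAction G A], Finite A →
    ∀ n : ℕ,
      (∀ f : (Fin (n + 1) → G) → A, cochainD (n + 1) f = 0 →
        ∃ N : Subgroup G, N.Normal ∧ N.FiniteIndex ∧ (∀ x ∈ N, ∀ a : A, x • a = a) ∧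
          ∃ (e : (Fin (n + 1) → G) → A) (b : (Fin n → G) → A),
            FactorsThroughQuotient N e ∧ cochainD (n + 1) e = 0 ∧ f = e + cochainD n b) ∧
      (∀ N : Subgroup G, N.Normal → N.FiniteIndex → (∀ x ∈ N, ∀ a : A, x • a = a) →
        ∀ e : (Fin (n + 1) → G) → A, FactorsThroughQuotient N e →
          cochainD (n + 1) e = 0 → (∃ b : (Fin n → G) → A, e = cochainD n b) →
          ∃ N' : Subgroup G, N'.Normal ∧ N'.FiniteIndex ∧ N' ≤ N ∧
            ∃ b : (Fin n → G) → A, FactorsThroughQuotient N' b ∧ e = cochainD n b)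

/-- A group is residually finite if every nontrivial element survives in some
finite quotient. -/
def ResiduallyFinite (G : Type u) [Group G] : Prop :=
  ∀ g : G, g ≠ 1 → ∃ (Q : Type u) (_ : Group Q) (_ : Finite Q) (f : G →* Q), f g ≠ 1


namespace GoodAux

section Basic

variable {G : Type u} [Group G] {A : Type u} [AddCommGroup A] [DistribMulAction G A]
  {B : Type u} [AddCommGroup B] [DistribMulAction G B]

lemma D_add (n : ℕ) (f f' : (Fin n → G) → A) :
    cochainD n (f + f') = cochainD n f + cochainD n f' := by
  funext g
  simp only [cochainD, Pi.add_apply, smul_add, Finset.sum_add_distrib]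
  abel

lemma D_neg (n : ℕ) (f : (Fin n → G) → A) :
    cochainD n (-f) = -cochainD n f := by
  funext g
  simp only [cochainD, Pi.neg_apply, smul_neg, Finset.sum_neg_distrib]
  abel

lemma D_sub (n : ℕ) (f f' : (Fin n → G) → A) :
    cochainD n (f - f') = cochainD n f - cochainD n f' := by
  rw [sub_eq_add_neg, D_add, D_neg, sub_eq_add_neg]

lemma D_zero (n : ℕ) : cochainD n (0 : (Fin n → G) → A) = 0 := by
  funext g
  simp [cochainD]

lemma D_map (φ : A →+[G] B) (n : ℕ) (f : (Fin n → G) → A) :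
    cochainD n (φ ∘ f) = φ ∘ cochainD n f := by
  funext g
  have hz : ∀ (k : ℤ) (a : A), φ (k • a) = k • φ a := fun k a => map_zsmul φ k a
  simp only [cochainD, Function.comp, map_add, map_smul, map_sum, hz]

lemma smul_zsmul_aux (g : G) (k : ℤ) (a : A) : g • (k • a) = k • (g • a) :=
  map_zsmul (DistribSMul.toAddMonoidHom A g) k a

lemma D_D (n : ℕ) (f : (Fin n → G) → A) : cochainD (n + 1) (cochainD n f) = 0 := by
  have : SMulCommClass G (ULift.{u} ℤ) A := ⟨fun g k a => by
    change g • (k.down • a) = k.down • (g • a)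
    exact smul_zsmul_aux g k.down a⟩
  let R : Rep.{u} (ULift.{u} ℤ) G := Rep.ofDistribMulAction (ULift.{u} ℤ) G A
  have hd : ∀ (m : ℕ) (f : (Fin m → G) → A),
      (inhomogeneousCochains.d R m).hom f = cochainD m f := by
    intro m f
    funext g
    refine (inhomogeneousCochains.d_hom_apply R m f g).trans ?_
    have hs : ∀ (j : ℕ) (a : A), ((-1 : ULift.{u} ℤ) ^ j) • a = ((-1 : ℤ) ^ j) • a := by
      intro j a
      rcases Nat.even_or_odd j with h | h
      · simp [h.neg_one_pow]
      · simp only [h.neg_one_pow, neg_smul, one_smul]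
    exact congrArg₂ (· + ·) rfl (Finset.sum_congr rfl fun j _ => hs _ _)
  have h := groupCohomology.inhomogeneousCochains.d_comp_d n R
  have h2 : (inhomogeneousCochains.d R (n + 1)).hom ((inhomogeneousCochains.d R n).hom f) = 0 :=
    congrArg (fun φ => φ.hom f) h
  have h3 : (inhomogeneousCochains.d R (n + 1)).hom (cochainD (A := A) n f) = 0 :=
    (congrArg (fun x => (inhomogeneousCochains.d R (n + 1)).hom x) (hd n f).symm).trans h2
  exact (hd (n + 1) _).symm.trans h3

lemma ftq_iff (N : Subgroup G) {X : Type u} {n : ℕ} (f : (Fin n → G) → X) :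
    FactorsThroughQuotient N f ↔ ∀ g g' : Fin n → G,
      ((QuotientGroup.mk : G → G ⧸ N) ∘ g = (QuotientGroup.mk : G → G ⧸ N) ∘ g') → f g = f g' := by
  simp only [FactorsThroughQuotient, funext_iff, Function.comp, QuotientGroup.eq]

lemma ftq_D (N : Subgroup G) [N.Normal] {n : ℕ} (f : (Fin n → G) → A)
    (hf : FactorsThroughQuotient N f) (htr : ∀ x ∈ N, ∀ g, x • f g = f g) :
    FactorsThroughQuotient N (cochainD n f) := by
  rw [ftq_iff] at hf ⊢
  intro g g' h
  have h0 : g 0 • f (fun i => g i.succ) = g' 0 • f (fun i => g' i.succ) := by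
    have h1 : f (fun i => g i.succ) = f (fun i => g' i.succ) :=
      hf _ _ (funext fun i => congrFun h i.succ)
    rw [h1]
    have h2 : (g 0)⁻¹ * g' 0 ∈ N := QuotientGroup.eq.1 (congrFun h 0)
    conv_lhs => rw [← htr _ h2]
    rw [smul_smul, mul_inv_cancel_left]
  have h1 : ∀ j : Fin (n + 1), f (j.contractNth (· * ·) g) = f (j.contractNth (· * ·) g') := by
    intro j
    apply hf
    rw [Fin.comp_contractNth (· * ·) (· * ·) (fun x y => QuotientGroup.mk_mul N x y),
      Fin.comp_contractNth (· * ·) (· * ·) (fun x y => QuotientGroup.mk_mul N x y), h]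
  simp only [cochainD, h0, h1]

lemma ftq_mono {N N' : Subgroup G} (h : N' ≤ N) {X : Type u} {n : ℕ} {f : (Fin n → G) → X}
    (hf : FactorsThroughQuotient N f) : FactorsThroughQuotient N' f :=
  fun g g' hg => hf g g' fun i => h (hg i)

lemma ftq_comp {N : Subgroup G} {X Y : Type u} {n : ℕ} {f : (Fin n → G) → X} (s : X → Y)
    (hf : FactorsThroughQuotient N f) : FactorsThroughQuotient N (s ∘ f) :=
  fun g g' hg => congrArg s (hf g g' hg)

lemma ftq_of_comp {N : Subgroup G} {X Y : Type u} {n : ℕ} {f : (Fin n → G) → X} (s : X → Y)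
    (hs : Function.Injective s)
    (hf : FactorsThroughQuotient N (s ∘ f)) : FactorsThroughQuotient N f :=
  fun g g' hg => hs (hf g g' hg)

lemma ftq_add {N : Subgroup G} {n : ℕ} {f f' : (Fin n → G) → A}
    (hf : FactorsThroughQuotient N f) (hf' : FactorsThroughQuotient N f') :
    FactorsThroughQuotient N (f + f') :=
  fun g g' hg => congrArg₂ (· + ·) (hf g g' hg) (hf' g g' hg)

lemma ftq_sub {N : Subgroup G} {n : ℕ} {f f' : (Fin n → G) → A}
    (hf : FactorsThroughQuotient N f) (hf' : FactorsThroughQuotient N f') :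
    FactorsThroughQuotient N (f - f') :=
  fun g g' hg => congrArg₂ (· - ·) (hf g g' hg) (hf' g g' hg)

lemma ftq_bot {X : Type u} {n : ℕ} (f : (Fin n → G) → X) :
    FactorsThroughQuotient (⊥ : Subgroup G) f := by
  intro g g' h
  congr 1
  funext i
  have := h i
  rw [Subgroup.mem_bot, inv_mul_eq_one] at this
  exact this

/-- Coboundaries of cochains that factor through `G/N`, in all degrees. -/
def CobF (N : Subgroup G) : (n : ℕ) → ((Fin n → G) → A) → Prop
  | 0, f => f = 0
  | n + 1, f => ∃ b : (Fin n → G) → A, FactorsThroughQuotient N b ∧ f = cochainD n b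

lemma CobF.D {N : Subgroup G} {n : ℕ} {f : (Fin n → G) → A} (h : CobF N n f) :
    cochainD n f = 0 := by
  cases n with
  | zero => rw [show f = 0 from h, D_zero]
  | succ n => obtain ⟨b, -, rfl⟩ := h; exact D_D n b

lemma CobF.map {N : Subgroup G} {n : ℕ} {f : (Fin n → G) → A} (h : CobF N n f)
    (φ : A →+[G] B) : CobF N n (φ ∘ f) := by
  cases n with
  | zero => rw [show f = 0 from h]; funext x; exact map_zero φ
  | succ n => obtain ⟨b, hb, rfl⟩ := h; exact ⟨φ ∘ b, ftq_comp _ hb, (D_map φ n b).symm⟩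

lemma CobF.neg {N : Subgroup G} {n : ℕ} {f : (Fin n → G) → A} (h : CobF N n f) :
    CobF N n (-f) := by
  cases n with
  | zero => rw [show f = 0 from h]; exact neg_zero
  | succ n =>
    obtain ⟨b, hb, rfl⟩ := h
    exact ⟨-b, fun g g' hg => congrArg (- ·) (hb g g' hg), (D_neg n b).symm⟩

lemma CobF.ftq {N : Subgroup G} [N.Normal] (htr : ∀ x ∈ N, ∀ a : A, x • a = a)
    {n : ℕ} {f : (Fin n → G) → A} (h : CobF N n f) :
    FactorsThroughQuotient N f := by
  cases n with
  | zero => intro g g' _; congr 1; exact Subsingleton.elim _ _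
  | succ n => obtain ⟨b, hb, rfl⟩ := h; exact ftq_D N b hb fun x hx g => htr x hx _

lemma CobF.lift {N : Subgroup G} {n : ℕ} {f : (Fin n → G) → B} (h : CobF N n f)
    (p : A →+[G] B) (hp : Function.Surjective p) :
    ∃ f' : (Fin n → G) → A, CobF N n f' ∧ p ∘ f' = f := by
  cases n with
  | zero =>
    rw [show f = 0 from h]
    exact ⟨0, rfl, by funext x; exact map_zero p⟩
  | succ n =>
    obtain ⟨b, hb, rfl⟩ := h
    refine ⟨cochainD n (Function.surjInv hp ∘ b), ⟨_, ftq_comp _ hb, rfl⟩, ?_⟩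
    rw [← D_map]
    congr 1
    funext x
    exact Function.surjInv_eq hp _

/-- cokernels of maps of modules -/
lemma exists_coker (φ : A →+[G] B) :
    ∃ (C : Type u) (_ : AddCommGroup C) (_ : DistribMulAction G C) (p : B →+[G] C),
      Function.Surjective p ∧ ∀ x, p x = 0 ↔ ∃ a, φ a = x := by
  let S : AddSubgroup B := (φ : A →+ B).range
  have hS : ∀ g : G, S ≤ S.comap (DistribSMul.toAddMonoidHom B g) := by
    rintro g _ ⟨a, rfl⟩
    exact ⟨g • a, map_smul φ g a⟩
  let _ : SMul G (B ⧸ S) := ⟨fun g => QuotientAddGroup.map S S _ (hS g)⟩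
  have hsm : ∀ (g : G) (b : B), g • (b : B ⧸ S) = ((g • b : B) : B ⧸ S) := fun g b => rfl
  let _ : DistribMulAction G (B ⧸ S) :=
    { one_smul := by
        intro b
        induction b using QuotientAddGroup.induction_on with | H b => rw [hsm, one_smul]
      mul_smul := by
        intro g h b
        induction b using QuotientAddGroup.induction_on with
        | H b => rw [hsm, hsm, hsm, mul_smul]
      smul_zero := fun g => map_zero (QuotientAddGroup.map S S _ (hS g))
      smul_add := fun g => map_add (QuotientAddGroup.map S S _ (hS g)) }
  refine ⟨B ⧸ S, inferInstance, inferInstance,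
    { toFun := fun b => (b : B ⧸ S)
      map_smul' := fun g b => rfl
      map_zero' := rfl
      map_add' := fun _ _ => rfl }, QuotientAddGroup.mk_surjective, fun x => ?_⟩
  exact QuotientAddGroup.eq_zero_iff x

end Basic

section Coind

variable {G : Type u} [Group G]

/-- The coinduced module of functions on `G/N`. -/
structure Coind (N : Subgroup G) (A : Type u) where
  val : G → A
  prop : ∀ x, ∀ y ∈ N, val (x * y) = val x

variable {N : Subgroup G} {A : Type u} [AddCommGroup A]

@[ext] lemma Coind.ext' {a b : Coind N A} (h : ∀ x, a.val x = b.val x) : a = b := by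
  cases a; cases b; congr; exact funext h

instance : Zero (Coind N A) := ⟨⟨fun _ => 0, fun _ _ _ => rfl⟩⟩
instance : Add (Coind N A) :=
  ⟨fun a b => ⟨fun x => a.val x + b.val x, fun x y hy => by rw [a.prop x y hy, b.prop x y hy]⟩⟩
instance : Neg (Coind N A) :=
  ⟨fun a => ⟨fun x => - a.val x, fun x y hy => by rw [a.prop x y hy]⟩⟩
@[simp] lemma Coind.zero_val (x : G) : (0 : Coind N A).val x = 0 := rfl
@[simp] lemma Coind.add_val (a b : Coind N A) (x : G) : (a + b).val x = a.val x + b.val x := rfl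
@[simp] lemma Coind.neg_val (a : Coind N A) (x : G) : (-a).val x = - a.val x := rfl

instance : AddCommGroup (Coind N A) where
  add_assoc a b c := by ext x; simp [add_assoc]
  zero_add a := by ext x; simp
  add_zero a := by ext x; simp
  add_comm a b := by ext x; simp [add_comm]
  neg_add_cancel a := by ext x; simp
  nsmul := nsmulRec
  zsmul := zsmulRec

/-- evaluation -/
def Coind.ev (x : G) : Coind N A →+ A where
  toFun a := a.val x
  map_zero' := rfl
  map_add' _ _ := rfl

lemma Coind.ev_apply (x : G) (a : Coind N A) : Coind.ev x a = a.val x := rfl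

lemma Coind.sub_val (a b : Coind N A) (x : G) : (a - b).val x = a.val x - b.val x :=
  map_sub (Coind.ev x) a b

instance [hN : N.Normal] : DistribMulAction G (Coind N A) where
  smul g a := ⟨fun x => a.val (x * g), fun x y hy => by
    have := a.prop (x * g) (g⁻¹ * y * g) (by simpa using hN.conj_mem y hy g⁻¹)
    rw [← this]; congr 1; group⟩
  one_smul a := by ext x; exact congrArg a.val (mul_one x)
  mul_smul g h a := by ext x; exact congrArg a.val (mul_assoc x g h).symm
  smul_zero g := rfl
  smul_add g a b := rfl

@[simp] lemma Coind.smul_val [hN : N.Normal] (g : G) (a : Coind N A) (x : G) :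
    (g • a).val x = a.val (x * g) := rfl

lemma Coind.triv [hN : N.Normal] (g : G) (hg : g ∈ N) (a : Coind N A) : g • a = a := by
  ext x; exact a.prop x g hg

lemma Coind.finite [Finite A] [N.FiniteIndex] : Finite (Coind N A) := by
  refine Finite.of_injective (β := (G ⧸ N) → A) (fun a q => a.val q.out) ?_
  intro a b h
  ext x
  have := congrFun h (x : G ⧸ N)
  obtain ⟨y, hy⟩ := QuotientGroup.mk_out_eq_mul N x
  simp only [hy] at this
  rwa [a.prop x _ y.2, b.prop x _ y.2] at this

variable [DistribMulAction G A]

/-- The embedding of a module into its coinduced module. -/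
def Coind.emb [N.Normal] (htr : ∀ x ∈ N, ∀ a : A, x • a = a) : A →+[G] Coind N A where
  toFun a := ⟨fun x => x • a, fun x y hy => by rw [mul_smul, htr y hy]⟩
  map_smul' g a := by ext x; exact (mul_smul x g a).symm
  map_zero' := by ext x; exact smul_zero x
  map_add' a b := by ext x; exact smul_add x a b

@[simp] lemma Coind.emb_val [N.Normal] (htr : ∀ x ∈ N, ∀ a : A, x • a = a) (a : A) (x : G) :
    (Coind.emb htr a).val x = x • a := rfl

lemma Coind.emb_injective [N.Normal] (htr : ∀ x ∈ N, ∀ a : A, x • a = a) :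
    Function.Injective (Coind.emb htr) := by
  intro a b h
  have := congrArg (fun c => c.val 1) h
  simpa using this

/-- functoriality -/
def Coind.map [N.Normal] {B : Type u} [AddCommGroup B] [DistribMulAction G B] (φ : A →+[G] B) :
    Coind N A →+[G] Coind N B where
  toFun a := ⟨fun x => φ (a.val x), fun x y hy => by rw [a.prop x y hy]⟩
  map_smul' g a := rfl
  map_zero' := by ext x; exact map_zero φ
  map_add' a b := by ext x; exact map_add φ _ _

@[simp] lemma Coind.map_val [N.Normal] {B : Type u} [AddCommGroup B] [DistribMulAction G B]
    (φ : A →+[G] B) (a : Coind N A) (x : G) : (Coind.map φ a).val x = φ (a.val x) := rfl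

lemma Coind.kill [N.Normal] (htr : ∀ x ∈ N, ∀ a : A, x • a = a) (n : ℕ)
    (e : (Fin (n + 1) → G) → A) (he : FactorsThroughQuotient N e) (hD : cochainD (n + 1) e = 0) :
    ∃ c : (Fin n → G) → Coind N A, FactorsThroughQuotient N c ∧
      Coind.emb htr ∘ e = cochainD n c := by
  refine ⟨fun g => ⟨fun x => e (Fin.cons x g), fun x y hy => he _ _ ?_⟩, ?_, ?_⟩
  · intro i
    refine Fin.cases ?_ (fun i => ?_) i
    · simpa using hy
    · simp
  · intro g g' h
    ext x
    refine he _ _ fun i => ?_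
    refine Fin.cases ?_ (fun i => ?_) i
    · simp
    · simpa using h i
  · funext g
    ext x
    have h := congrFun hD (Fin.cons x g)
    rw [← Coind.ev_apply x (cochainD _ _ _)]
    simp only [cochainD, map_add, map_sum, map_zsmul, Coind.ev_apply, Coind.smul_val]
    simp only [cochainD, Fin.cons_zero, Fin.cons_succ, Pi.zero_apply] at h
    rw [Fin.sum_univ_succ] at h
    have h0 : (0 : Fin (n + 2)).contractNth (· * ·) (Fin.cons x g : Fin (n + 2) → G)
        = Fin.cons (x * g 0) (fun i => g i.succ) := by
      funext i
      refine Fin.cases ?_ (fun i => ?_) i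
      · rw [Fin.contractNth_apply_of_eq _ _ _ _ rfl]; simp
      · rw [Fin.contractNth_apply_of_gt _ _ _ _ (by simp)]; simp
    have h1 : ∀ j : Fin (n + 1), j.succ.contractNth (· * ·) (Fin.cons x g : Fin (n + 2) → G)
        = Fin.cons x (j.contractNth (· * ·) g) := by
      intro j
      funext i
      refine Fin.cases ?_ (fun i => ?_) i
      · rw [Fin.contractNth_apply_of_lt _ _ _ _ (by simp)]; simp
      · simp only [Fin.contractNth, Fin.val_succ, add_lt_add_iff_right, add_left_inj,
          Fin.cons_succ, ← Fin.succ_castSucc]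
    simp only [h0, h1, Fin.val_succ, Fin.val_zero, zero_add, pow_one, neg_smul, one_smul] at h
    have h2 : ∀ (j : ℕ) (a : A), ((-1 : ℤ) ^ (j + 1 + 1)) • a = - (((-1 : ℤ) ^ (j + 1)) • a) := by
      intro j a; rw [pow_succ (-1 : ℤ) (j + 1)]; simp
    simp only [h2, Finset.sum_neg_distrib] at h
    rw [Function.comp, Coind.emb_val]
    rw [← sub_eq_zero, ← h]
    abel

end Coind

section Eff

variable {G : Type u} [Group G]

lemma exists_ker (A : Type u) [AddCommGroup A] [DistribMulAction G A] [Finite A] :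
    ∃ K : Subgroup G, K.Normal ∧ K.FiniteIndex ∧ ∀ x ∈ K, ∀ a : A, x • a = a := by
  refine ⟨(MulAction.toPermHom G A).ker, inferInstance, Subgroup.finiteIndex_ker _, ?_⟩
  intro x hx a
  have := MonoidHom.mem_ker.1 hx
  exact congrArg (fun σ : Equiv.Perm A => σ a) this

/-- all cocycles of positive degree can be killed in a larger finite module -/
def Effaceable (G : Type u) [Group G] : Prop :=
  ∀ (A : Type u) [AddCommGroup A] [DistribMulAction G A], Finite A →
    ∀ (n : ℕ) (f : (Fin (n + 1) → G) → A), cochainD (n + 1) f = 0 →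
      ∃ (A' : Type u) (_ : AddCommGroup A') (_ : DistribMulAction G A') (_ : Finite A')
        (φ : A →+[G] A') (b : (Fin n → G) → A'), Function.Injective φ ∧ φ ∘ f = cochainD n b

/-- surjectivity in degree `n` -/
def SurjAt (G : Type u) [Group G] (n : ℕ) : Prop :=
  ∀ (A : Type u) [AddCommGroup A] [DistribMulAction G A], Finite A →
    ∀ f : (Fin n → G) → A, cochainD n f = 0 →
      ∃ N : Subgroup G, N.Normal ∧ N.FiniteIndex ∧ (∀ x ∈ N, ∀ a : A, x • a = a) ∧
        ∃ e : (Fin n → G) → A, FactorsThroughQuotient N e ∧ cochainD n e = 0 ∧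
          CobF (⊥ : Subgroup G) n (f - e)

/-- injectivity in degree `n` -/
def InjAt (G : Type u) [Group G] (n : ℕ) : Prop :=
  ∀ (A : Type u) [AddCommGroup A] [DistribMulAction G A], Finite A →
    ∀ N : Subgroup G, N.Normal → N.FiniteIndex → (∀ x ∈ N, ∀ a : A, x • a = a) →
      ∀ e : (Fin n → G) → A, FactorsThroughQuotient N e → cochainD n e = 0 →
        CobF (⊥ : Subgroup G) n e →
        ∃ N' : Subgroup G, N'.Normal ∧ N'.FiniteIndex ∧ N' ≤ N ∧ CobF N' n e

lemma comp_inj {X Y Z : Type u} {φ : Y → Z} (h : Function.Injective φ) {f g : X → Y}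
    (hfg : φ ∘ f = φ ∘ g) : f = g := funext fun x => h (congrFun hfg x)

lemma comp_add' {X A B : Type u} [AddCommGroup A] [DistribMulAction G A] [AddCommGroup B]
    [DistribMulAction G B] (φ : A →+[G] B) (f g : X → A) : φ ∘ (f + g) = φ ∘ f + φ ∘ g :=
  funext fun x => map_add φ (f x) (g x)

lemma comp_sub' {X A B : Type u} [AddCommGroup A] [DistribMulAction G A] [AddCommGroup B]
    [DistribMulAction G B] (φ : A →+[G] B) (f g : X → A) : φ ∘ (f - g) = φ ∘ f - φ ∘ g :=
  funext fun x => map_sub φ (f x) (g x)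

lemma lift_ker {X A B C : Type u} [AddCommGroup A] [DistribMulAction G A] [AddCommGroup B]
    [DistribMulAction G B] [AddCommGroup C] [DistribMulAction G C] (φ : A →+[G] B)
    (p : B →+[G] C) (hp : ∀ x, p x = 0 ↔ ∃ a, φ a = x) (f : X → B) (hf : p ∘ f = 0) :
    ∃ α : X → A, φ ∘ α = f := by
  choose α hα using fun x => (hp (f x)).1 (congrFun hf x)
  exact ⟨α, funext hα⟩

lemma comp_zero_of {X A B C : Type u} [AddCommGroup A] [DistribMulAction G A] [AddCommGroup B]
    [DistribMulAction G B] [AddCommGroup C] [DistribMulAction G C] (φ : A →+[G] B)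
    (p : B →+[G] C) (hp : ∀ x, p x = 0 ↔ ∃ a, φ a = x) (f : X → A) : p ∘ (φ ∘ f) = 0 :=
  funext fun x => (hp _).2 ⟨f x, rfl⟩

lemma surj_zero : SurjAt G 0 := by
  intro A _ _ hA f hf
  obtain ⟨K, h1, h2, h3⟩ := exists_ker (G := G) A
  refine ⟨K, h1, h2, h3, f, ?_, hf, sub_self f⟩
  intro g g' _
  congr 1
  exact Subsingleton.elim _ _

lemma surj_succ (hE : Effaceable G) (n : ℕ) (hs : SurjAt G n) : SurjAt G (n + 1) := by
  intro A _ _ hA f hf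
  obtain ⟨A', _, _, hA', φ, b, hφ, hb⟩ := hE A hA n f hf
  obtain ⟨B, _, _, p, hps, hp⟩ := exists_coker φ
  have hB : Finite B := Finite.of_surjective p hps
  have hpb : cochainD n (p ∘ b) = 0 := by
    rw [D_map, ← hb, comp_zero_of φ p hp]
  obtain ⟨N, hN1, hN2, hN3, e, he, hDe, hcob⟩ := hs B hB (p ∘ b) hpb
  obtain ⟨K, hK1, hK2, hK3⟩ := exists_ker (G := G) A'
  obtain ⟨κ, hκ, hpκ⟩ := hcob.lift p hps
  let x : (Fin n → G) → A' := Function.surjInv hps ∘ e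
  have hpx : p ∘ x = e := funext fun g => Function.surjInv_eq hps _
  have htr : ∀ y ∈ N ⊓ K, ∀ a : A', y • a = a := fun y hy => hK3 y hy.2
  have hx : FactorsThroughQuotient (N ⊓ K) x := ftq_mono inf_le_left (ftq_comp _ he)
  obtain ⟨β, hβ⟩ := lift_ker φ p hp (b - κ - x) (by
    rw [comp_sub', comp_sub', hpκ, hpx]; abel)
  obtain ⟨α, hα⟩ := lift_ker φ p hp (cochainD n x) (by rw [← D_map, hpx, hDe])
  refine ⟨N ⊓ K, inferInstance, inferInstance, ?_, α, ?_, ?_, β, ftq_bot _, ?_⟩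
  · intro y hy a
    apply hφ
    rw [map_smul, htr y hy]
  · apply ftq_of_comp φ hφ
    rw [hα]
    exact ftq_D _ _ hx fun y hy g => htr y hy _
  · apply comp_inj hφ
    rw [← D_map, hα, D_D]
    exact funext fun g => (map_zero φ).symm
  · apply comp_inj hφ
    rw [comp_sub', hα, hb, ← D_map, hβ, D_sub, D_sub, hκ.D]
    abel

lemma inj_zero : InjAt G 0 := by
  intro A _ _ hA N h1 h2 _ e _ _ h
  exact ⟨N, h1, h2, le_rfl, h⟩

lemma inj_succ (n : ℕ) (hs : SurjAt G n) (hi : InjAt G n) : InjAt G (n + 1) := by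
  intro A _ _ hA N hN1 hN2 hN3 e he hDe hcob
  obtain ⟨b, -, hb⟩ := hcob
  have hA' : Finite (Coind N A) := Coind.finite
  obtain ⟨c, hc, hec⟩ := Coind.kill hN3 n e he hDe
  have hi' := Coind.emb_injective hN3
  generalize Coind.emb hN3 = i at hec hi'
  obtain ⟨B, _, _, p, hps, hp⟩ := exists_coker i
  have hB : Finite B := Finite.of_surjective p hps
  have hbc : cochainD n (i ∘ b - c) = 0 := by
    rw [D_sub, D_map, ← hec, hb, sub_self]
  obtain ⟨M, hM1, hM2, hM3, u, hu, hDu, hcu⟩ := hs (Coind N A) hA' _ hbc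
  have htr : ∀ y ∈ N ⊓ M, ∀ a : Coind N A, y • a = a := fun y hy => hM3 y hy.2
  have hcu' : FactorsThroughQuotient (N ⊓ M) (c + u) :=
    ftq_add (ftq_mono inf_le_left hc) (ftq_mono inf_le_right hu)
  have hcob : CobF (⊥ : Subgroup G) n (p ∘ (c + u)) := by
    have := (hcu.map p).neg
    convert this using 1
    rw [comp_sub', comp_sub', comp_add', comp_zero_of i p hp]
    abel
  obtain ⟨N', hP1, hP2, hP3, hP4⟩ := hi B hB (N ⊓ M) inferInstance inferInstance
    (by
      intro y hy a
      obtain ⟨a, rfl⟩ := hps a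
      rw [← map_smul, htr y hy])
    (p ∘ (c + u)) (ftq_comp _ hcu') hcob.D hcob
  obtain ⟨κ, hκ, hpκ⟩ := hP4.lift p hps
  obtain ⟨β, hβ⟩ := lift_ker i p hp (c + u - κ) (by rw [comp_sub', hpκ, sub_self])
  refine ⟨N', hP1, hP2, hP3.trans inf_le_left, β, ?_, ?_⟩
  · apply ftq_of_comp i hi'
    rw [hβ]
    exact ftq_sub (A := Coind N A) (ftq_mono hP3 hcu') (hκ.ftq fun y hy => htr y (hP3 hy))
  · apply comp_inj hi'
    rw [← D_map, hβ, D_sub, D_add, hDu, hκ.D, hec]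
    abel

lemma good_of_effaceable (hE : Effaceable G) : IsGood G := by
  have hs : ∀ n, SurjAt G n := fun n => by
    induction n with
    | zero => exact surj_zero
    | succ n ih => exact surj_succ hE n ih
  have hi : ∀ n, InjAt G n := fun n => by
    induction n with
    | zero => exact inj_zero
    | succ n ih => exact inj_succ n (hs n) ih
  intro A _ _ hA n
  constructor
  · intro f hf
    obtain ⟨N, h1, h2, h3, e, he, hDe, b, -, hb⟩ := hs (n + 1) A hA f hf
    exact ⟨N, h1, h2, h3, e, b, he, hDe, by rw [← hb]; abel⟩
  · rintro N h1 h2 h3 e he hDe ⟨b, hb⟩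
    exact hi (n + 1) A hA N h1 h2 h3 e he hDe ⟨b, ftq_bot _, hb⟩

end Eff

section Central

variable {G : Type u} [Group G]

lemma exists_t (z : G) (hz : ∀ x, z * x = x * z) (N : Subgroup G) [N.Normal] (m : ℤ)
    (hm : ∀ j : ℤ, z ^ j ∈ N → m ∣ j) :
    ∃ t : G → ℤ, (∀ x, m ∣ t (x * z) - t x - 1) ∧ ∀ x, ∀ y ∈ N, m ∣ t (x * y) - t x := by
  have hzj : ∀ (j : ℤ) (x : G), x * z ^ j = z ^ j * x := fun j x =>
    ((show Commute x z from (hz x).symm).zpow_right j).eq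
  let H : Subgroup G := Subgroup.zpowers z ⊔ N
  have key : ∀ x : G, ∃ j : ℤ, ∃ n ∈ N, x = (x : G ⧸ H).out * (z ^ j * n) := by
    intro x
    obtain ⟨h, hh⟩ := QuotientGroup.mk_out_eq_mul H x
    have hmem : (h : G)⁻¹ ∈ Subgroup.zpowers z ⊔ N := H.inv_mem h.2
    obtain ⟨y, hy, n, hn, hyn⟩ := Subgroup.mem_sup_of_normal_right.1 hmem
    obtain ⟨j, rfl⟩ := Subgroup.mem_zpowers_iff.1 hy
    exact ⟨j, n, hn, by rw [hh, hyn]; group⟩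
  choose t n hn ht using key
  have main : ∀ (x : G) (i : ℤ) (y : G), y ∈ N → m ∣ t (x * (z ^ i * y)) - t x - i := by
    intro x i y hy
    have hout : ((x * (z ^ i * y) : G) : G ⧸ H) = (x : G ⧸ H) := by
      rw [eq_comm, QuotientGroup.eq, inv_mul_cancel_left]
      exact H.mul_mem (Subgroup.mem_sup_left (Subgroup.zpow_mem_zpowers z i))
        (Subgroup.mem_sup_right hy)
    have h1 := ht (x * (z ^ i * y))
    rw [hout] at h1
    have h2 := ht x
    generalize (x : G ⧸ H).out = o at h1 h2
    generalize t (x * (z ^ i * y)) = j' at *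
    have hn' := hn (x * (z ^ i * y))
    generalize n (x * (z ^ i * y)) = n' at *
    have hnx := hn x
    generalize n x = n0 at *
    generalize t x = j at *
    subst h2
    apply hm
    have h3 : z ^ j * n0 * (z ^ i * y) = z ^ j' * n' := by
      rw [mul_assoc o] at h1; exact mul_left_cancel h1
    have h4 : z ^ (j' - j - i) = n0 * y * n'⁻¹ := by
      rw [eq_mul_inv_iff_mul_eq, zpow_sub, zpow_sub]
      have : z ^ j * n0 * (z ^ i * y) = z ^ i * z ^ j * (n0 * y) := by
        rw [← mul_assoc, mul_assoc (z ^ j), hzj i, ← mul_assoc, hzj i]; group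
      rw [this] at h3
      have h5 : n0 * y = (z ^ j)⁻¹ * (z ^ i)⁻¹ * (z ^ j' * n') := by rw [← h3]; group
      rw [h5]
      group
    rw [h4]
    exact N.mul_mem (N.mul_mem hnx hy) (N.inv_mem hn')
  refine ⟨t, fun x => ?_, fun x y hy => ?_⟩
  · simpa using main x 1 1 N.one_mem
  · simpa using main x 0 y hy

lemma exists_int_sum {A : Type u} [AddCommGroup A] (w : ℤ → A) :
    ∃ h : ℤ → A, ∀ t, h (t + 1) - h t = w t := by
  refine ⟨fun t => match t with
    | Int.ofNat n => ∑ i ∈ Finset.range n, w i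
    | Int.negSucc n => - ∑ i ∈ Finset.range (n + 1), w (Int.negSucc i), ?_⟩
  intro t
  rcases t with n | n
  · change (∑ i ∈ Finset.range (n + 1), w i) - (∑ i ∈ Finset.range n, w i) = _
    rw [Finset.sum_range_succ]; simp
  · rcases n with _ | n
    · change (∑ i ∈ Finset.range 0, w i) - -(∑ i ∈ Finset.range 1, w (Int.negSucc i)) = _
      simp
    · change -(∑ i ∈ Finset.range (n + 1), w (Int.negSucc i))
        - -(∑ i ∈ Finset.range (n + 1 + 1), w (Int.negSucc i)) = _
      rw [Finset.sum_range_succ _ (n + 1)]; abel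

lemma coind_surj (z : G) (hz : ∀ x, z * x = x * z) (hinf : ∀ j : ℤ, z ^ j = 1 → j = 0) {A : Type u} [AddCommGroup A]
    (a : Coind (⊥ : Subgroup G) A) : ∃ b : Coind (⊥ : Subgroup G) A, z • b - b = a := by
  obtain ⟨t, ht, -⟩ := exists_t z hz ⊥ 0 (by
    intro j hj; rw [hinf j (Subgroup.mem_bot.1 hj)])
  have ht' : ∀ x, t (x * z) = t x + 1 := fun x => by
    have := zero_dvd_iff.1 (ht x); omega
  choose h hh using fun r : G => exists_int_sum fun i : ℤ => a.val (r * z ^ i)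
  refine ⟨⟨fun x => h (x * z ^ (-t x)) (t x), ?_⟩, ?_⟩
  · intro x y hy; rw [Subgroup.mem_bot.1 hy, mul_one]
  · ext x
    rw [Coind.sub_val, Coind.smul_val]
    change h (x * z * z ^ (-t (x * z))) (t (x * z)) - h (x * z ^ (-t x)) (t x) = _
    have : x * z * z ^ (-t (x * z)) = x * z ^ (-t x) := by rw [ht']; group
    rw [this, ht', hh]
    congr 1
    group

lemma exists_emb (z : G) (hz : ∀ x, z * x = x * z) {A : Type u} [AddCommGroup A] [DistribMulAction G A] [Finite A]
    (hind : ∀ m : ℕ, 0 < m → ∃ N : Subgroup G, N.Normal ∧ N.FiniteIndex ∧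
      ∀ j : ℤ, z ^ j ∈ N → (m : ℤ) ∣ j) :
    ∃ (A' : Type u) (_ : AddCommGroup A') (_ : DistribMulAction G A') (_ : Finite A')
      (φ : A →+[G] A'), Function.Injective φ ∧ ∀ a, ∃ a', z • a' - a' = φ a := by
  obtain ⟨N, hN1, hN2, hN3⟩ := hind (Nat.card (Equiv.Perm A)) Nat.card_pos
  obtain ⟨K, hK1, hK2, hK3⟩ := exists_ker (G := G) A
  have htr : ∀ y ∈ N ⊓ K, ∀ a : A, y • a = a := fun y hy => hK3 y hy.2
  have hfin : Finite (Coind (N ⊓ K) A) := Coind.finite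
  refine ⟨Coind (N ⊓ K) A, inferInstance, inferInstance, hfin, Coind.emb htr,
    Coind.emb_injective htr, fun a => ?_⟩
  obtain ⟨t, ht1, ht2⟩ := exists_t z hz (N ⊓ K) (Nat.card (Equiv.Perm A))
    (fun j hj => hN3 j hj.1)
  let σ : Equiv.Perm A := (MulAction.toPerm z).trans (Equiv.subRight a)
  have hσ : ∀ x, σ x = z • x - a := fun x => rfl
  have hper : ∀ j : ℤ, (Nat.card (Equiv.Perm A) : ℤ) ∣ j → σ ^ j = 1 := by
    rintro j ⟨k, rfl⟩
    rw [zpow_mul, zpow_natCast, pow_card_eq_one', one_zpow]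
  refine ⟨⟨fun x => x • (σ ^ (- t x)) 0, ?_⟩, ?_⟩
  · intro x y hy
    have h1 := hper _ (ht2 x y hy)
    have h2 : σ ^ (-t (x * y)) = σ ^ (-t x) := by
      rw [show -t (x * y) = -t x - (t (x * y) - t x) by ring, zpow_sub, h1]; simp
    rw [h2, mul_smul, htr y hy]
  · ext x
    rw [Coind.sub_val, Coind.smul_val, Coind.emb_val]
    change (x * z) • (σ ^ (- t (x * z))) 0 - x • (σ ^ (- t x)) 0 = x • a
    have h1 := hper _ (ht1 x)
    have h2 : σ ^ (-t x) = σ * σ ^ (-t (x * z)) := by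
      rw [show -t x = 1 + -t (x * z) + (t (x * z) - t x - 1) by ring, zpow_add, h1, zpow_add]
      simp
    rw [h2, Equiv.Perm.mul_apply, hσ, mul_smul, ← smul_sub]
    congr 1
    abel

lemma inflate (z : G) (hz : ∀ x, z * x = x * z)
    (hinf : ∀ j : ℤ, z ^ j = 1 → j = 0) (Z : Subgroup G) (hZ : Z = Subgroup.zpowers z)
    [Z.Normal] (n : ℕ) :
    ∀ (A A' : Type u) [AddCommGroup A] [DistribMulAction G A] [AddCommGroup A']
      [DistribMulAction G A'] (φ : A →+[G] A'), (∀ a, ∃ a', z • a' - a' = φ a) →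
      ∀ f : (Fin n → G) → A, cochainD n f = 0 →
        ∃ e : (Fin n → G) → A', FactorsThroughQuotient Z e ∧ (∀ g, z • e g = e g) ∧
          cochainD n e = 0 ∧ CobF (⊥ : Subgroup G) n (φ ∘ f - e) := by
  induction n with
  | zero =>
    intro A A' _ _ _ _ φ hφ f hf
    refine ⟨φ ∘ f, ?_, ?_, ?_, sub_self _⟩
    · intro g g' _
      congr 1
      exact Subsingleton.elim _ _
    · intro g
      have h := congrFun hf (fun _ => z)
      simp only [cochainD, Fin.sum_univ_succ, Finset.univ_eq_empty, Finset.sum_empty, add_zero,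
        Fin.val_zero, zero_add, pow_one, neg_smul, one_smul, Pi.zero_apply] at h
      have h2 : z • f g - f g = 0 := by
        have h3 : ∀ g' : Fin 0 → G, f g' = f g := fun g' => by
          congr 1; exact Subsingleton.elim _ _
        rw [sub_eq_add_neg, ← h]
        exact congrArg₂ (fun a b => z • a + -b) (h3 _).symm (h3 _).symm
      rw [Function.comp, ← map_smul, sub_eq_zero.1 h2]
    · rw [D_map, hf]; exact funext fun _ => map_zero φ
  | succ n ih =>
    intro A A' _ _ _ _ φ hφ f hf
    have htr : ∀ x ∈ (⊥ : Subgroup G), ∀ a : A, x • a = a := by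
      intro x hx a; rw [Subgroup.mem_bot.1 hx, one_smul]
    have htr' : ∀ x ∈ (⊥ : Subgroup G), ∀ a : A', x • a = a := by
      intro x hx a; rw [Subgroup.mem_bot.1 hx, one_smul]
    obtain ⟨b, -, hb⟩ := Coind.kill htr n f (ftq_bot f) hf
    have hsur := coind_surj z hz hinf (A := A)
    have hΦ : ∀ a, Coind.map (N := ⊥) φ (Coind.emb htr a) = Coind.emb htr' (φ a) := by
      intro a; ext x; simp
    have hi := Coind.emb_injective htr
    have hi' := Coind.emb_injective htr'
    generalize Coind.emb htr = i at *
    generalize Coind.emb htr' = i' at *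
    generalize Coind.map (N := (⊥ : Subgroup G)) φ = Φ at *
    obtain ⟨B, _, _, p, hps, hp⟩ := exists_coker i
    have hpb : cochainD n (p ∘ b) = 0 := by
      rw [D_map, ← hb, comp_zero_of i p hp]
    obtain ⟨e, he, hze, hDe, hcob⟩ := ih B B (DistribMulActionHom.id G) (by
      intro y
      obtain ⟨y, rfl⟩ := hps y
      obtain ⟨y', rfl⟩ := hsur y
      exact ⟨p y', by rw [map_sub, map_smul]; rfl⟩) (p ∘ b) hpb
    have key : ∀ y : B, ∃ (x : Coind (⊥ : Subgroup G) A) (m : A'), p x = y ∧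
        (z • y = y → z • (Φ x - i' m) = Φ x - i' m) := by
      intro y
      obtain ⟨x, rfl⟩ := hps y
      by_cases hy : z • p x = p x
      · obtain ⟨a, ha⟩ := (hp (z • x - x)).1 (by rw [map_sub, map_smul, hy, sub_self])
        obtain ⟨m, hm⟩ := hφ a
        refine ⟨x, m, rfl, fun _ => ?_⟩
        have h1 : z • Φ x - Φ x = z • i' m - i' m := by
          rw [← map_smul, ← map_sub, ← map_smul, ← map_sub, ← ha, hm, hΦ]
        rw [smul_sub, ← sub_eq_zero]
        rw [← sub_eq_zero] at h1
        rw [← h1]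
        abel
      · exact ⟨x, 0, rfl, fun h => absurd h hy⟩
    choose X M hX hM using key
    obtain ⟨κ, hκ, hpκ⟩ := hcob.lift p hps
    have hpx : p ∘ (X ∘ e) = e := funext fun g => hX _
    obtain ⟨β, hβ⟩ := lift_ker i p hp (b - κ - X ∘ e) (by
      rw [comp_sub', comp_sub', hpκ, hpx]
      change p ∘ b - (p ∘ b - e) - e = 0
      abel)
    obtain ⟨α, hα⟩ := lift_ker i p hp (cochainD n (X ∘ e)) (by rw [← D_map, hpx, hDe])
    have hf2 : f = α + cochainD n β := by
      apply comp_inj hi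
      rw [comp_add', hα, hb, ← D_map, hβ, D_sub, D_sub, hκ.D]
      abel
    let e' : (Fin n → G) → Coind (⊥ : Subgroup G) A' := (fun y => Φ (X y) - i' (M y)) ∘ e
    have hep1 : FactorsThroughQuotient Z e' := ftq_comp _ he
    have hep2 : ∀ g, z • e' g = e' g := fun g => hM _ (hze g)
    let ζ : Coind (⊥ : Subgroup G) A' →+[G] Coind (⊥ : Subgroup G) A' :=
      { toFun := fun x => z • x
        map_smul' := fun g x => by
          change z • g • x = g • z • x
          rw [smul_smul, smul_smul, hz]
        map_zero' := smul_zero z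
        map_add' := smul_add z }
    have hep3 : ∀ g, z • cochainD n e' g = cochainD n e' g := by
      intro g
      have h1 : ζ ∘ e' = e' := funext hep2
      have h2 := D_map ζ n e'
      rw [h1] at h2
      exact (congrFun h2 g).symm
    have hw : i' ∘ (φ ∘ α - cochainD n (M ∘ e)) = cochainD n e' := by
      have h1 : e' = Φ ∘ (X ∘ e) - i' ∘ (M ∘ e) := rfl
      rw [h1, D_sub, D_map, D_map, ← hα, comp_sub']
      congr 1
      exact funext fun g => (hΦ _).symm
    refine ⟨φ ∘ α - cochainD n (M ∘ e), ?_, ?_, ?_, M ∘ e + φ ∘ β, ftq_bot _, ?_⟩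
    · apply ftq_of_comp i' hi'
      rw [hw]
      refine ftq_D Z e' hep1 ?_
      intro x hx g
      rw [hZ] at hx
      have hst : z ∈ MulAction.stabilizer G (e' g) := hep2 g
      exact (Subgroup.zpowers_le.2 hst) hx
    · intro g
      apply hi'
      rw [map_smul]
      have := hep3 g
      rwa [← hw] at this
    · apply comp_inj hi'
      rw [← D_map, hw, D_D]
      exact funext fun g => (map_zero i').symm
    · rw [D_add, D_map, hf2, comp_add']
      abel

end Central

section Final

variable {G : Type u} [Group G]

/-- pulling back cochains from a quotient -/
lemma D_pullback (Z : Subgroup G) [Z.Normal] {A B : Type u} [AddCommGroup A]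
    [DistribMulAction G A] [AddCommGroup B] [DistribMulAction (G ⧸ Z) B] (ι : B →+ A)
    (hι : ∀ (g : G) (b : B), ι ((g : G ⧸ Z) • b) = g • ι b) (n : ℕ)
    (f : (Fin n → G ⧸ Z) → B) (g : Fin (n + 1) → G) :
    cochainD n (fun g : Fin n → G => ι (f ((QuotientGroup.mk : G → G ⧸ Z) ∘ g))) g =
      ι (cochainD n f ((QuotientGroup.mk : G → G ⧸ Z) ∘ g)) := by
  simp only [cochainD, map_add, map_sum, map_zsmul]
  congr 1
  · exact (hι _ _).symm
  · refine Finset.sum_congr rfl fun j _ => ?_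
    rw [Fin.comp_contractNth (· * ·) (· * ·) (fun x y => QuotientGroup.mk_mul Z x y)]

lemma exists_inv (Z : Subgroup G) [Z.Normal] (A : Type u) [AddCommGroup A]
    [DistribMulAction G A] :
    ∃ (B : Type u) (_ : AddCommGroup B) (_ : DistribMulAction (G ⧸ Z) B) (ι : B →+ A),
      Function.Injective ι ∧ (∀ (g : G) (b : B), ι ((g : G ⧸ Z) • b) = g • ι b) ∧
      ∀ a : A, (∀ x ∈ Z, x • a = a) → ∃ b, ι b = a := by
  let S : AddSubgroup A :=
    { carrier := {a | ∀ x ∈ Z, x • a = a}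
      zero_mem' := fun x _ => smul_zero x
      add_mem' := fun {a b} ha hb x hx => by rw [smul_add, ha x hx, hb x hx]
      neg_mem' := fun {a} ha x hx => by rw [smul_neg, ha x hx] }
  have hmem : ∀ (g : G) (a : A), a ∈ S → g • a ∈ S := by
    intro g a ha x hx
    have h1 := ha (g⁻¹ * x * g) (by
      simpa using (inferInstance : Z.Normal).conj_mem x hx g⁻¹)
    conv_rhs => rw [← h1]
    rw [smul_smul, smul_smul]
    congr 1
    group
  let ρ : G →* AddMonoid.End S :=
    { toFun := fun g =>
        { toFun := fun a => ⟨g • (a : A), hmem g a a.2⟩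
          map_zero' := Subtype.ext (smul_zero g)
          map_add' := fun a b => Subtype.ext (smul_add g (a : A) (b : A)) }
      map_one' := by ext a; exact one_smul G (a : A)
      map_mul' := fun g h => by ext a; exact mul_smul g h (a : A) }
  let ρ' : G ⧸ Z →* AddMonoid.End S := QuotientGroup.lift Z ρ (by
    intro x hx
    ext a
    exact a.2 x hx)
  let _ : DistribMulAction (G ⧸ Z) S := DistribMulAction.compHom S ρ'
  refine ⟨S, inferInstance, inferInstance, S.subtype, Subtype.val_injective,
    fun g b => rfl, fun a ha => ⟨⟨a, ha⟩, rfl⟩⟩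

end Final

end GoodAux

open GoodAux

/-- If `1 → Z → G → Q → 1` is a central extension with `Z` infinite cyclic, `Q` good
and residually finite, and the profinite topology of `G` induces the full profinite
topology on `Z`, then `G` is good. -/
theorem isGood_of_central_extension (G : Type u) [Group G] (Z : Subgroup G) [Z.Normal]
    (hcent : Z ≤ Subgroup.center G)
    (z : G) (hz : ¬ IsOfFinOrder z) (hZ : Z = Subgroup.zpowers z)
    (hgood : IsGood (G ⧸ Z)) (hrf : ResiduallyFinite (G ⧸ Z))
    (hind : ∀ m : ℕ, 0 < m → ∃ N : Subgroup G, N.Normal ∧ N.FiniteIndex ∧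
      ∀ x ∈ N, x ∈ Z → ∃ y ∈ Z, x = y ^ m) :
    IsGood G := by
  have hzZ : z ∈ Z := by rw [hZ]; exact Subgroup.mem_zpowers z
  have hzc : ∀ x, z * x = x * z := fun x => (Subgroup.mem_center_iff.1 (hcent hzZ) x).symm
  have hinj : Function.Injective fun n : ℤ => z ^ n := injective_zpow_iff_not_isOfFinOrder.2 hz
  have hinf : ∀ j : ℤ, z ^ j = 1 → j = 0 := fun j hj => hinj (by simpa using hj)
  have hind' : ∀ m : ℕ, 0 < m → ∃ N : Subgroup G, N.Normal ∧ N.FiniteIndex ∧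
      ∀ j : ℤ, z ^ j ∈ N → (m : ℤ) ∣ j := by
    intro m hm
    obtain ⟨N, h1, h2, h3⟩ := hind m hm
    refine ⟨N, h1, h2, fun j hj => ?_⟩
    obtain ⟨y, hy, hjy⟩ := h3 _ hj (Z.zpow_mem hzZ j)
    rw [hZ] at hy
    obtain ⟨i, rfl⟩ := Subgroup.mem_zpowers_iff.1 hy
    refine ⟨i, hinj ?_⟩
    change z ^ j = z ^ ((m : ℤ) * i)
    rw [hjy, mul_comm, zpow_mul, zpow_natCast]
  apply good_of_effaceable
  intro A _ _ hA n f hf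
  obtain ⟨A', _, _, hA', φ, hφ, hφz⟩ := exists_emb z hzc (A := A) hind'
  obtain ⟨e, he, hze, hDe, b, -, hb⟩ := inflate z hzc hinf Z hZ (n + 1) A A' φ hφz f hf
  obtain ⟨B, _, _, ι, hι, hιs, hιm⟩ := exists_inv Z A'
  have hB : Finite B := Finite.of_injective ι hι
  let π : G → G ⧸ Z := QuotientGroup.mk
  -- descend `e` to `G/Z`
  have hlift : ∀ q : Fin (n + 1) → G ⧸ Z, ∃ y : B, ι y = e (fun i => (q i).out) := by
    intro q
    apply hιm
    intro x hx
    rw [hZ] at hx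
    have hst : z ∈ MulAction.stabilizer G (e fun i => (q i).out) := hze _
    exact (Subgroup.zpowers_le.2 hst) hx
  choose ε hε using hlift
  have hεe : ∀ g : Fin (n + 1) → G, ι (ε (π ∘ g)) = e g := by
    intro g
    rw [hε]
    refine (ftq_iff Z e).1 he _ _ (funext fun i => ?_)
    exact Quotient.out_eq' _
  have hDε : cochainD (n + 1) ε = 0 := by
    funext q
    obtain ⟨g, rfl⟩ : ∃ g : Fin (n + 2) → G, π ∘ g = q :=
      ⟨fun i => (q i).out, funext fun i => Quotient.out_eq' _⟩
    apply hι
    rw [← D_pullback Z ι hιs]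
    have : (fun g : Fin (n + 1) → G => ι (ε (π ∘ g))) = e := funext hεe
    change cochainD (n + 1) (fun g : Fin (n + 1) → G => ι (ε (π ∘ g))) g = _
    rw [this, hDe]
    exact (map_zero ι).symm
  obtain ⟨N, hN1, hN2, -, e1, b1, he1, hDe1, heb⟩ := (hgood B hB n).1 ε hDε
  let N1 : Subgroup G := N.comap (QuotientGroup.mk' Z)
  have hN1' : N1.Normal := hN1.comap _
  have hN2' : N1.FiniteIndex := ⟨by
    rw [Subgroup.index_comap_of_surjective N (QuotientGroup.mk'_surjective Z)]
    exact hN2.index_ne_zero⟩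
  obtain ⟨K, hK1, hK2, hK3⟩ := exists_ker (G := G) A'
  let e2 : (Fin (n + 1) → G) → A' := fun g => ι (e1 (π ∘ g))
  let b2 : (Fin n → G) → A' := fun g => ι (b1 (π ∘ g))
  have hDe2 : cochainD (n + 1) e2 = 0 := by
    funext g
    refine (D_pullback Z ι hιs (n + 1) e1 g).trans ?_
    rw [hDe1]
    exact map_zero ι
  have he2 : FactorsThroughQuotient (N1 ⊓ K) e2 := by
    intro g g' h
    exact congrArg ι (he1 _ _ fun i => (h i).1)
  have hee : e = e2 + cochainD n b2 := by
    funext g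
    rw [← hεe g, heb, Pi.add_apply, map_add]
    exact congrArg₂ (· + ·) rfl (D_pullback Z ι hιs n b1 g).symm
  have htr : ∀ y ∈ N1 ⊓ K, ∀ a : A', y • a = a := fun y hy => hK3 y hy.2
  have hfin : Finite (Coind (N1 ⊓ K) A') := Coind.finite
  obtain ⟨c, -, hc⟩ := Coind.kill htr n e2 he2 hDe2
  refine ⟨Coind (N1 ⊓ K) A', inferInstance, inferInstance, hfin, (Coind.emb htr).comp φ,
    c + Coind.emb htr ∘ (b2 + b), (Coind.emb_injective htr).comp hφ, ?_⟩
  have hff : φ ∘ f = e2 + cochainD n (b2 + b) := by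
    rw [D_add, ← hb, hee]; abel
  change Coind.emb htr ∘ (φ ∘ f) = _
  rw [hff, comp_add', D_add n c, D_map, hc]
end

section
/- Conjugacy separability is preserved under free products: if A and B are conjugacy separable groups, then A * B is conjugacy separable. -/
/-- A group is conjugacy separable if any two non-conjugate elements remain
non-conjugate in some finite quotient. -/
def ConjugacySeparable (G : Type u) [Group G] : Prop :=
  ∀ a b : G, ¬ IsConj a b →
    ∃ (Q : Type u) (_ : Group Q) (_ : Finite Q) (f : G →* Q),
      Function.Surjective f ∧ ¬ IsConj (f a) (f b)

namespace FreeProdCS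

open Monoid

lemma isConj_of_eq {G : Type u} [Group G] {x y : G} (h : x = y) : IsConj x y := h ▸ IsConj.refl _

/-! ### Residual finiteness -/

lemma exists_sep_finset {A : Type u} [Group A] (hA : ConjugacySeparable A) (S : Finset A) :
    ∃ (Q : Type u) (_ : Group Q) (_ : Finite Q) (f : A →* Q), ∀ s ∈ S, s ≠ 1 → f s ≠ 1 := by
  classical
  induction S using Finset.induction_on with
  | empty => exact ⟨PUnit, inferInstance, inferInstance, 1, by simp⟩
  | insert a S _ ih =>
    obtain ⟨Q, _, _, f, hf⟩ := ih
    by_cases ha : a = 1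
    · exact ⟨Q, inferInstance, inferInstance, f, by
        intro s hs h1
        rcases Finset.mem_insert.1 hs with rfl | hs
        · exact absurd ha h1
        · exact hf s hs h1⟩
    · obtain ⟨R, _, _, g, _, hg⟩ := hA a 1 (by simpa using ha)
      refine ⟨Q × R, inferInstance, inferInstance, f.prod g, ?_⟩
      intro s hs h1 h2
      have h3 := Prod.ext_iff.1 h2
      rcases Finset.mem_insert.1 hs with rfl | hs
      · apply hg
        have : g s = 1 := h3.2
        rw [this, map_one]
      · exact hf s hs h1 h3.1

lemma exists_injOn {A : Type u} [Group A] (hA : ConjugacySeparable A) (S : Finset A) :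
    ∃ (Q : Type u) (_ : Group Q) (_ : Finite Q) (f : A →* Q),
      ∀ s ∈ S, ∀ t ∈ S, f s = f t → s = t := by
  classical
  obtain ⟨Q, _, _, f, hf⟩ := exists_sep_finset hA ((S ×ˢ S).image fun p => p.1 * p.2⁻¹)
  refine ⟨Q, inferInstance, inferInstance, f, fun s hs t ht h => ?_⟩
  by_contra hne
  refine hf (s * t⁻¹) ?_ ?_ ?_
  · exact Finset.mem_image.2 ⟨(s, t), by simp [hs, ht], rfl⟩
  · rwa [Ne, mul_inv_eq_one]
  · simp [h]

/-! ### The ring with hairs -/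

section ring

variable {L : ℕ} {K : Type u} [Group K] (c : ZMod L → K) (ty : ZMod L → Bool)

open Classical in
/-- The gluing involution. -/
noncomputable def sig (p : ZMod L × K) : ZMod L × K :=
  if p.2 = c p.1 then (p.1 + 1, 1) else if p.2 = 1 then (p.1 - 1, c (p.1 - 1)) else p

open Classical in
/-- Position of a point. -/
noncomputable def pos (p : ZMod L × K) : ZMod L := if p.2 = c p.1 then p.1 + 1 else p.1

lemma sig_c (j : ZMod L) : sig c (j, c j) = (j + 1, 1) := by simp [sig]

variable {c}

lemma sig_one (hc : ∀ j, c j ≠ 1) (j : ZMod L) : sig c (j, 1) = (j - 1, c (j - 1)) := by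
  simp [sig, (hc j).symm]

lemma sig_sig (hc : ∀ j, c j ≠ 1) (p : ZMod L × K) : sig c (sig c p) = p := by
  obtain ⟨j, g⟩ := p
  by_cases h : g = c j
  · subst h; rw [sig_c, sig_one hc]; simp
  · by_cases h1 : g = 1
    · subst h1; rw [sig_one hc, sig_c]; simp
    · simp [sig, h, h1]

lemma pos_c (j : ZMod L) : pos c (j, c j) = j + 1 := by simp [pos]

lemma pos_one (hc : ∀ j, c j ≠ 1) (j : ZMod L) : pos c (j, 1) = j := by
  simp [pos, (hc j).symm]

lemma pos_sig (hc : ∀ j, c j ≠ 1) (p : ZMod L × K) : pos c (sig c p) = pos c p := by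
  obtain ⟨j, g⟩ := p
  by_cases h : g = c j
  · subst h; rw [sig_c, pos_one hc, pos_c]
  · by_cases h1 : g = 1
    · subst h1; rw [sig_one hc, pos_c, pos_one hc]; simp
    · simp [sig, h, h1]

/-- The gluing involution as a permutation. -/
noncomputable def sigP (hc : ∀ j, c j ≠ 1) : Equiv.Perm (ZMod L × K) where
  toFun := sig c
  invFun := sig c
  left_inv := sig_sig hc
  right_inv := sig_sig hc

/-- Left multiplication on the fibres of type `e`. -/
def T (e : Bool) : K →* Equiv.Perm (ZMod L × K) where
  toFun k :=
    { toFun := fun p => if ty p.1 = e then (p.1, k * p.2) else p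
      invFun := fun p => if ty p.1 = e then (p.1, k⁻¹ * p.2) else p
      left_inv := fun p => by by_cases h : ty p.1 = e <;> simp [h]
      right_inv := fun p => by by_cases h : ty p.1 = e <;> simp [h] }
  map_one' := by ext p <;> simp
  map_mul' a b := by
    ext1 p
    by_cases h : ty p.1 = e <;> simp [h, mul_assoc]

lemma T_apply (e : Bool) (k : K) (p : ZMod L × K) :
    T ty e k p = if ty p.1 = e then (p.1, k * p.2) else p := rfl

/-- Being an edge of the ring. -/
def IsRing (c : ZMod L → K) (p : ZMod L × K) : Prop :=
  p = (pos c p, 1) ∨ sig c p = (pos c p, 1)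

lemma IsRing.sig (hc : ∀ j, c j ≠ 1) {p : ZMod L × K} (h : IsRing c p) :
    IsRing c (sig c p) := by
  unfold IsRing at *
  rw [pos_sig hc, sig_sig hc]
  exact h.symm

/-- One step. -/
lemma step (hc : ∀ j, c j ≠ 1) (e : Bool) (k : K) (q : ZMod L × K) :
    ∃ d : ℤ, |d| ≤ 1 ∧ pos c (T ty e k q) = pos c q + d ∧
      (d = 1 → IsRing c (T ty e k q) ∧
        (IsRing c q → ty (pos c q) = e ∧ k = c (pos c q))) := by
  obtain ⟨j, g⟩ := q
  by_cases hj : ty j = e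
  · have hT : T ty e k (j, g) = (j, k * g) := by simp [T_apply, hj]
    rw [hT]
    by_cases h1 : g = c j
    · by_cases h2 : k * g = c j
      · exact ⟨0, by simp, by rw [h2, h1]; simp, by simp⟩
      · exact ⟨-1, by simp, by simp [pos, h1, h1 ▸ h2], by simp⟩
    · by_cases h2 : k * g = c j
      · refine ⟨1, by simp, by simp [pos, h1, h2], fun _ => ⟨?_, ?_⟩⟩
        · rw [h2]; right; rw [sig_c, pos_c]
        · have hp : pos c (j, g) = j := by simp [pos, h1]
          rw [IsRing, hp]
          rintro (h | h)
          · have hg : g = 1 := congrArg Prod.snd h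
            subst hg
            exact ⟨hj, by simpa using h2⟩
          · have h3 := congrArg (FreeProdCS.sig c) h
            rw [sig_sig hc, sig_one hc] at h3
            have h4 : j = j - 1 := congrArg Prod.fst h3
            have h5 : g = c (j - 1) := congrArg Prod.snd h3
            rw [← h4] at h5
            exact absurd h5 h1
      · exact ⟨0, by simp, by simp [pos, h1, h2], by simp⟩
  · have hT : T ty e k (j, g) = (j, g) := by simp [T_apply, hj]
    rw [hT]
    exact ⟨0, by simp, by simp, by simp⟩

end ring

/-! ### Words -/

section words

variable {A B : Type u} [Group A] [Group B]

/-- A letter as an element of the free product. -/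
def ltr (s : A ⊕ B) : Coprod A B := Sum.elim (fun a => Coprod.inl a) (fun b => Coprod.inr b) s

/-- Evaluation of a list, in reverse order. -/
def E : List (A ⊕ B) → Coprod A B
  | [] => 1
  | s :: l => E l * ltr s

lemma E_append (l m : List (A ⊕ B)) : E (l ++ m) = E m * E l := by
  induction l with
  | nil => simp [E]
  | cons s l ih => simp [E, ih, mul_assoc]

lemma exists_E (g : Coprod A B) : ∃ l : List (A ⊕ B), E l = g := by
  induction g using Coprod.induction_on with
  | inl a => exact ⟨[Sum.inl a], by simp [E, ltr]⟩
  | inr b => exact ⟨[Sum.inr b], by simp [E, ltr]⟩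
  | mul x y hx hy =>
    obtain ⟨l, rfl⟩ := hx
    obtain ⟨m, rfl⟩ := hy
    exact ⟨m ++ l, E_append _ _⟩

/-- Value of the ring word. -/
def ringWord {L : ℕ} (u : ZMod L → A ⊕ B) : ZMod L → ℕ → Coprod A B
  | _, 0 => 1
  | r, k + 1 => ringWord u (r + 1) k * ltr (u r)

lemma ringWord_succ {L : ℕ} (u : ZMod L → A ⊕ B) (r : ZMod L) (k : ℕ) :
    ringWord u r (k + 1) = ltr (u (r + k)) * ringWord u r k := by
  induction k generalizing r with
  | zero => simp [ringWord]
  | succ k ih =>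
    rw [ringWord, ih, ringWord, mul_assoc]
    congr 3
    push_cast; ring

lemma ringWord_conj {L : ℕ} [NeZero L] (u : ZMod L → A ⊕ B) (n : ℕ) (hu : ∀ j, u (j + n) = u j)
    (r : ZMod L) : IsConj (ringWord u 0 n) (ringWord u r n) := by
  have key : ∀ k : ℕ, IsConj (ringWord u 0 n) (ringWord u (k : ZMod L) n) := by
    intro k
    induction k with
    | zero => exact isConj_of_eq (by simp)
    | succ k ih =>
      refine ih.trans ?_
      rw [isConj_iff]
      refine ⟨ltr (u k), ?_⟩
      rw [mul_inv_eq_iff_eq_mul]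
      have h1 := ringWord_succ u k n
      rw [hu] at h1
      rw [← h1, ringWord]
      push_cast; rfl
  have := key r.val
  rwa [ZMod.natCast_zmod_val] at this

lemma E_eq_ringWord {L : ℕ} (u : ZMod L → A ⊕ B) (l : List (A ⊕ B)) (r : ZMod L)
    (h : ∀ (i : ℕ) (hi : i < l.length), l[i] = u (r + i)) : E l = ringWord u r l.length := by
  induction l generalizing r with
  | nil => rfl
  | cons s l ih =>
    rw [E, List.length_cons, ringWord, ih (r + 1)]
    · have := h 0 (by simp)
      simp at this
      rw [this]
    · intro i hi
      have := h (i + 1) (by simpa using hi)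
      simp at this
      rw [this]
      congr 1; ring

/-- `l` is of minimal length in its conjugacy class. -/
def Mini (l : List (A ⊕ B)) : Prop := ∀ m, IsConj (E l) (E m) → l.length ≤ m.length

lemma exists_mini (g : Coprod A B) : ∃ l : List (A ⊕ B), IsConj g (E l) ∧ Mini l := by
  classical
  have hex : ∃ n, ∃ l : List (A ⊕ B), IsConj g (E l) ∧ l.length = n := by
    obtain ⟨l, rfl⟩ := exists_E g
    exact ⟨_, l, IsConj.refl _, rfl⟩
  obtain ⟨l, hl, hn⟩ := Nat.find_spec hex
  refine ⟨l, hl, fun m hm => ?_⟩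
  rw [hn]
  exact Nat.find_min' hex ⟨m, hl.trans hm, rfl⟩

lemma E_rotate (l : List (A ⊕ B)) (n : ℕ) : IsConj (E l) (E (l.rotate n)) := by
  induction n generalizing l with
  | zero => rw [List.rotate_zero]
  | succ n ih =>
    rw [Nat.add_comm, ← List.rotate_rotate]
    refine IsConj.trans ?_ (ih _)
    cases l with
    | nil => exact IsConj.refl _
    | cons s l =>
      simp only [List.rotate_cons_succ, List.rotate_zero, E_append]
      rw [isConj_iff]
      exact ⟨ltr s, by simp [E, mul_assoc]⟩

lemma Mini.rotate {l : List (A ⊕ B)} (h : Mini l) (n : ℕ) : Mini (l.rotate n) := by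
  intro m hm
  simpa using h m ((E_rotate l n).trans hm)

lemma Mini.head {s : A ⊕ B} {l : List (A ⊕ B)} (h : Mini (s :: l)) :
    s ≠ Sum.inl 1 ∧ s ≠ Sum.inr 1 := by
  constructor
  · rintro rfl
    have := h l (isConj_of_eq (by simp [E, ltr]))
    simp at this
  · rintro rfl
    have := h l (isConj_of_eq (by simp [E, ltr]))
    simp at this

lemma Mini.head2 {s t : A ⊕ B} {l : List (A ⊕ B)} (h : Mini (s :: t :: l)) :
    t.isLeft ≠ s.isLeft := by
  intro hst
  rcases s with s | s <;> rcases t with t | t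
  · have := h (Sum.inl (t * s) :: l) (isConj_of_eq (by simp [E, ltr, mul_assoc]))
    simp at this
  · simp at hst
  · simp at hst
  · have := h (Sum.inr (t * s) :: l) (isConj_of_eq (by simp [E, ltr, mul_assoc]))
    simp at this

end words

/-! ### Separation -/

section sep

variable {G : Type u} [Group G]

/-- Separation by a finite quotient. -/
def Sep (x y : G) : Prop :=
  ∃ (Q : Type u) (_ : Group Q) (_ : Finite Q) (f : G →* Q), ∀ h, f (h * x * h⁻¹) ≠ f y

lemma Sep.symm {x y : G} (h : Sep x y) : Sep y x := by
  obtain ⟨Q, _, _, f, hf⟩ := h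
  refine ⟨Q, inferInstance, inferInstance, f, fun k hk => hf k⁻¹ ?_⟩
  simp only [map_mul, map_inv] at *
  rw [← hk]; group

lemma Sep.conj_left {x x' y : G} (h : Sep x y) (hx : IsConj x' x) : Sep x' y := by
  obtain ⟨Q, _, _, f, hf⟩ := h
  obtain ⟨k, rfl⟩ := isConj_iff.1 hx
  refine ⟨Q, inferInstance, inferInstance, f, fun h hk => hf (h * k⁻¹) ?_⟩
  rw [← hk]; congr 1; group

lemma Sep.exists {x y : G} (h : Sep x y) :
    ∃ (Q : Type u) (_ : Group Q) (_ : Finite Q) (f : G →* Q),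
      Function.Surjective f ∧ ¬ IsConj (f x) (f y) := by
  obtain ⟨Q, _, _, f, hf⟩ := h
  refine ⟨f.range, inferInstance, inferInstance, f.rangeRestrict,
    f.rangeRestrict_surjective, fun hc => ?_⟩
  obtain ⟨⟨_, k, rfl⟩, hk⟩ := isConj_iff.1 hc
  apply hf k
  have := congrArg Subtype.val hk
  simpa using this

lemma Sep.of_map {H : Type u} [Group H] (hH : ConjugacySeparable H) (p : G →* H) {x y : G}
    (h : ¬ IsConj (p x) (p y)) : Sep x y := by
  obtain ⟨Q, _, _, f, _, hf⟩ := hH _ _ h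
  refine ⟨Q, inferInstance, inferInstance, f.comp p, fun k hk => hf ?_⟩
  rw [isConj_iff]
  exact ⟨f (p k), by simpa using hk⟩

end sep

section core

variable {A B : Type u} [Group A] [Group B] {L : ℕ} {K : Type u} [Group K]

/-- The action of the free product on the ring with hairs. -/
noncomputable def act (u : ZMod L → A ⊕ B) (fA : A →* K) (fB : B →* K)
    (hc : ∀ j, Sum.elim fA fB (u j) ≠ 1) : Coprod A B →* Equiv.Perm (ZMod L × K) :=
  Coprod.lift ((T (fun j => (u j).isLeft) true).comp fA)
    ((MulAut.conj (sigP hc)).toMonoidHom.comp ((T (fun j => (u j).isLeft) false).comp fB))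

variable {u : ZMod L → A ⊕ B} {fA : A →* K} {fB : B →* K}
    (hc : ∀ j, Sum.elim fA fB (u j) ≠ 1)

lemma act_inl (a : A) (q : ZMod L × K) :
    act u fA fB hc (ltr (Sum.inl a)) q = T (fun j => (u j).isLeft) true (fA a) q := by
  simp [act, ltr]

lemma act_inr (b : B) (q : ZMod L × K) :
    act u fA fB hc (ltr (Sum.inr b)) q =
      sig (fun j => Sum.elim fA fB (u j)) (T (fun j => (u j).isLeft) false (fB b)
        (sig (fun j => Sum.elim fA fB (u j)) q)) := by
  simp [act, ltr]
  rfl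

lemma stepLetter (s : A ⊕ B) (q : ZMod L × K) :
    ∃ d : ℤ, |d| ≤ 1 ∧ pos (fun j => Sum.elim fA fB (u j)) (act u fA fB hc (ltr s) q) =
        pos (fun j => Sum.elim fA fB (u j)) q + d ∧
      (d = 1 → IsRing (fun j => Sum.elim fA fB (u j)) (act u fA fB hc (ltr s) q) ∧
        (IsRing (fun j => Sum.elim fA fB (u j)) q →
          s.isLeft = (u (pos (fun j => Sum.elim fA fB (u j)) q)).isLeft ∧
          Sum.elim fA fB s = Sum.elim fA fB (u (pos (fun j => Sum.elim fA fB (u j)) q)))) := by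
  rcases s with a | b
  · obtain ⟨d, h1, h2, h3⟩ := step (c := fun j => Sum.elim fA fB (u j))
      (fun j => (u j).isLeft) hc true (fA a) q
    rw [act_inl]
    refine ⟨d, h1, h2, fun hd => ⟨(h3 hd).1, fun hq => ?_⟩⟩
    obtain ⟨h4, h5⟩ := (h3 hd).2 hq
    exact ⟨h4.symm, h5⟩
  · obtain ⟨d, h1, h2, h3⟩ := step (c := fun j => Sum.elim fA fB (u j))
      (fun j => (u j).isLeft) hc false (fB b) (sig (fun j => Sum.elim fA fB (u j)) q)
    rw [act_inr, pos_sig hc]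
    rw [pos_sig hc] at h2 h3
    refine ⟨d, h1, h2, fun hd => ⟨(h3 hd).1.sig hc, fun hq => ?_⟩⟩
    obtain ⟨h4, h5⟩ := (h3 hd).2 (hq.sig hc)
    exact ⟨h4.symm, h5⟩

lemma walk (y : List (A ⊕ B))
    (hinj : ∀ s ∈ y, ∀ j, s.isLeft = (u j).isLeft →
      Sum.elim fA fB s = Sum.elim fA fB (u j) → s = u j) (q : ZMod L × K) :
    ∃ d : ℤ, |d| ≤ y.length ∧ pos (fun j => Sum.elim fA fB (u j)) (act u fA fB hc (E y) q) =
        pos (fun j => Sum.elim fA fB (u j)) q + d ∧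
      (d = y.length →
        (y ≠ [] → IsRing (fun j => Sum.elim fA fB (u j)) (act u fA fB hc (E y) q)) ∧
        (IsRing (fun j => Sum.elim fA fB (u j)) q →
          E y = ringWord u (pos (fun j => Sum.elim fA fB (u j)) q) y.length)) := by
  induction y generalizing q with
  | nil => exact ⟨0, by simp, by simp [E], by simp [E, ringWord]⟩
  | cons s l ih =>
    obtain ⟨d1, a1, a2, a3⟩ := stepLetter hc s q
    obtain ⟨d2, b1, b2, b3⟩ := ih (fun t ht => hinj t (List.mem_cons_of_mem _ ht))
      (act u fA fB hc (ltr s) q)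
    have hE : act u fA fB hc (E (s :: l)) q =
        act u fA fB hc (E l) (act u fA fB hc (ltr s) q) := by
      simp [E]
    rw [hE]
    refine ⟨d1 + d2, ?_, ?_, ?_⟩
    · rw [List.length_cons]; push_cast
      have := abs_add_le d1 d2
      linarith
    · rw [b2, a2]; push_cast; ring
    · intro hd
      rw [List.length_cons] at hd; push_cast at hd
      have e1 := abs_le.1 a1
      have e2 := abs_le.1 b1
      have hd1 : d1 = 1 := by linarith
      have hd2 : d2 = l.length := by linarith
      obtain ⟨a4, a5⟩ := a3 hd1
      obtain ⟨b4, b5⟩ := b3 hd2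
      constructor
      · intro _
        by_cases hl : l = []
        · subst hl; simpa [E] using a4
        · exact b4 hl
      · intro hq
        obtain ⟨a6, a7⟩ := a5 hq
        have hs := hinj s (by simp) _ a6 a7
        rw [List.length_cons, ringWord, E, b5 a4, a2, hd1, ← hs]
        simp

/-- The shift. -/
def shift (L : ℕ) (K : Type u) (n : ZMod L) : Equiv.Perm (ZMod L × K) :=
  (Equiv.addRight n).prodCongr (Equiv.refl K)

lemma shift_apply (n j : ZMod L) (g : K) : shift L K n (j, g) = (j + n, g) := rfl

lemma shift_sig {c : ZMod L → K} {n : ZMod L} (hp : ∀ j, c (j + n) = c j) (q : ZMod L × K) :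
    shift L K n (sig c q) = sig c (shift L K n q) := by
  obtain ⟨j, g⟩ := q
  have h1 : c (j + n - 1) = c (j - 1) := by rw [← hp (j - 1)]; congr 1; ring
  by_cases h : g = c j
  · simp only [sig, shift_apply, hp, h, if_true]; congr 1; ring
  · by_cases h2 : g = 1
    · subst h2
      simp only [sig, shift_apply, hp, h, h1, if_true, if_false]; congr 1; ring
    · simp [sig, shift_apply, hp, h, h2]

lemma shift_T {ty : ZMod L → Bool} {n : ZMod L} (hp : ∀ j, ty (j + n) = ty j) (e : Bool) (k : K)
    (q : ZMod L × K) : shift L K n (T ty e k q) = T ty e k (shift L K n q) := by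
  obtain ⟨j, g⟩ := q
  by_cases h : ty j = e <;> simp [T_apply, shift_apply, hp, h]

lemma shift_act {n : ZMod L} (hp : ∀ j, u (j + n) = u j) (g : Coprod A B) (q : ZMod L × K) :
    shift L K n (act u fA fB hc g q) = act u fA fB hc g (shift L K n q) := by
  induction g using Coprod.induction_on generalizing q with
  | inl a =>
    have := act_inl hc a
    simp only [ltr, Sum.elim_inl] at this
    rw [this, this, shift_T (fun j => by simp [hp])]
  | inr b =>
    have := act_inr hc b
    simp only [ltr, Sum.elim_inr] at this
    rw [this, this, shift_sig (fun j => by simp [hp]), shift_T (fun j => by simp [hp]),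
      shift_sig (fun j => by simp [hp])]
  | mul x y hx hy => simp only [map_mul, Equiv.Perm.mul_apply, hx, hy]

lemma pos_shift {c : ZMod L → K} {n : ZMod L} (hp : ∀ j, c (j + n) = c j) (q : ZMod L × K) :
    pos c (shift L K n q) = pos c q + n := by
  obtain ⟨j, g⟩ := q
  by_cases h : g = c j
  · simp only [pos, shift_apply, hp, h, if_true]; ring
  · simp [pos, shift_apply, hp, h]

lemma isRing_shift {c : ZMod L → K} {n : ZMod L} (hp : ∀ j, c (j + n) = c j) {q : ZMod L × K}
    (h : IsRing c (shift L K n q)) : IsRing c q := by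
  unfold IsRing at *
  rw [← shift_sig hp, pos_shift hp, ← shift_apply, (shift L K n).injective.eq_iff,
    (shift L K n).injective.eq_iff] at h
  exact h

open Classical in
/-- The ring edge at position `r`. -/
noncomputable def view (u : ZMod L → A ⊕ B) (fA : A →* K) (fB : B →* K) (r : ZMod L) :
    ZMod L × K :=
  if (u r).isLeft then (r, 1) else sig (fun j => Sum.elim fA fB (u j)) (r, 1)

lemma act_view (ht : ∀ j, (u (j + 1)).isLeft ≠ (u j).isLeft) (r : ZMod L) :
    act u fA fB hc (ltr (u r)) (view u fA fB r) = view u fA fB (r + 1) := by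
  have h1 := ht r
  have h2 := sig_one hc (r + 1)
  have h3 := sig_c (fun j => Sum.elim fA fB (u j)) r
  rcases hu : u r with a | b
  · have hr : (u (r + 1)).isLeft = false := by simpa [hu] using h1
    rw [act_inl]
    simp only [view, hu, hr, T_apply]
    simp [h2, hu]
  · have hr : (u (r + 1)).isLeft = true := by simpa [hu] using h1
    rw [act_inr]
    simp only [view, hu, hr]
    simp only [hu] at h3
    simp [sig_sig hc, T_apply, hu]
    simpa using h3

lemma act_ringWord (ht : ∀ j, (u (j + 1)).isLeft ≠ (u j).isLeft) (r : ZMod L) (k : ℕ) :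
    act u fA fB hc (ringWord u r k) (view u fA fB r) = view u fA fB (r + k) := by
  induction k generalizing r with
  | zero => simp [ringWord]
  | succ k ih =>
    rw [ringWord, map_mul, Equiv.Perm.mul_apply, act_view hc ht, ih]
    congr 1; push_cast; ring

lemma view_shift {n : ZMod L} (hp : ∀ j, u (j + n) = u j) (r : ZMod L) :
    view u fA fB (r + n) = shift L K n (view u fA fB r) := by
  unfold view
  rw [hp]
  split_ifs
  · rfl
  · rw [shift_sig (fun j => by simp [hp])]; rfl

lemma core1 [Finite K] (hc : ∀ j, Sum.elim fA fB (u j) ≠ 1) {n : ℕ} [NeZero n] (hL : L = 3 * n) (hp : ∀ j, u (j + n) = u j)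
    (ht : ∀ j, (u (j + 1)).isLeft ≠ (u j).isLeft) (y : List (A ⊕ B))
    (hinj : ∀ s ∈ y, ∀ j, s.isLeft = (u j).isLeft →
      Sum.elim fA fB s = Sum.elim fA fB (u j) → s = u j)
    (hy : y.length ≤ n) (hne : ¬ IsConj (ringWord u 0 n) (E y)) : Sep (ringWord u 0 n) (E y) := by
  have hn : 0 < n := Nat.pos_of_ne_zero (NeZero.ne n)
  have : NeZero L := ⟨by omega⟩
  have hp' : ∀ j, (fun j => Sum.elim fA fB (u j)) (j + n) = (fun j => Sum.elim fA fB (u j)) j :=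
    fun j => by simp [hp]
  refine ⟨Equiv.Perm (ZMod L × K), inferInstance, inferInstance, act u fA fB hc, ?_⟩
  intro h hh
  apply hne
  set q := act u fA fB hc h (view u fA fB 0) with hq
  have hyq : act u fA fB hc (E y) q = shift L K n q := by
    rw [← hh, hq, ← Equiv.Perm.mul_apply, ← map_mul, inv_mul_cancel_right, map_mul,
      Equiv.Perm.mul_apply, act_ringWord hc ht, view_shift hp, shift_act hc hp]
  obtain ⟨d, d1, d2, d3⟩ := walk hc y hinj q
  rw [hyq, pos_shift hp'] at d2
  have d4 : ((n : ℤ) : ZMod L) = (d : ZMod L) := by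
    push_cast; exact add_left_cancel d2
  rw [ZMod.intCast_eq_intCast_iff_dvd_sub] at d4
  have d5 := abs_le.1 d1
  have d6 : d = n := by
    obtain ⟨m, hm⟩ := d4
    subst hL
    push_cast at hm
    have hn' : (0 : ℤ) < n := by exact_mod_cast hn
    have hy' : (y.length : ℤ) ≤ n := by exact_mod_cast hy
    have m1 : m < 1 := by nlinarith
    have m2 : -1 < m := by nlinarith
    have m0 : m = 0 := by omega
    subst m0
    linarith
  have hlen : y.length = n := by omega
  obtain ⟨e1, e2⟩ := d3 (by omega)
  rw [hyq] at e1
  have hr := isRing_shift hp' (e1 (by rintro rfl; simp at hlen; omega))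
  rw [e2 hr, hlen]
  exact ringWord_conj u n hp _

end core

section final

variable {A B : Type u} [Group A] [Group B]

lemma core (hA : ConjugacySeparable A) (hB : ConjugacySeparable B) (l y : List (A ⊕ B))
    (hl : Mini l) (h2 : 2 ≤ l.length) (hy : y.length ≤ l.length)
    (hne : ¬ IsConj (E l) (E y)) : Sep (E l) (E y) := by
  classical
  obtain ⟨n, hn⟩ : ∃ n, n = l.length := ⟨_, rfl⟩
  have : NeZero n := ⟨by omega⟩
  have : NeZero (3 * n) := ⟨by have := NeZero.ne n; omega⟩
  let v : ZMod n → A ⊕ B := fun j => l[j.val]'(hn ▸ j.val_lt)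
  let u : ZMod (3 * n) → A ⊕ B := fun j => v (ZMod.castHom (Dvd.intro_left 3 rfl) (ZMod n) j)
  have hv : ∀ j, v j ∈ l := fun j => List.getElem_mem _
  have hrot : ∀ j : ZMod n, ∃ m, Mini (v j :: v (j + 1) :: m) := by
    intro j
    have hm := hl.rotate j.val
    obtain ⟨s, t, m, hst⟩ : ∃ s t m, l.rotate j.val = s :: t :: m := by
      have : 2 ≤ (l.rotate j.val).length := by simpa using h2
      rcases hr : l.rotate j.val with _ | ⟨s, _ | ⟨t, m⟩⟩
      · simp [hr] at this
      · simp [hr] at this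
      · exact ⟨s, t, m, rfl⟩
    have hs : s = v j := by
      have h0 : (l.rotate j.val)[0]? = some s := by rw [hst]; rfl
      rw [List.getElem?_rotate (by omega)] at h0
      rw [zero_add, Nat.mod_eq_of_lt (hn ▸ j.val_lt)] at h0
      rw [List.getElem?_eq_getElem (hn ▸ j.val_lt)] at h0
      exact (Option.some.inj h0).symm
    have ht : t = v (j + 1) := by
      have h0 : (l.rotate j.val)[1]? = some t := by rw [hst]; rfl
      rw [List.getElem?_rotate (by omega)] at h0
      have hval : (1 + j.val) % l.length = (j + 1).val := by
        have : Fact (1 < n) := ⟨by omega⟩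
        rw [ZMod.val_add, ZMod.val_one, ← hn, Nat.add_comm]
      rw [hval, List.getElem?_eq_getElem (hn ▸ (j + 1).val_lt)] at h0
      exact (Option.some.inj h0).symm
    rw [hst, hs, ht] at hm
    exact ⟨m, hm⟩
  have hval : ∀ i < n, (ZMod.castHom (Dvd.intro_left 3 rfl) (ZMod n) (i : ZMod (3 * n))).val = i := by
    intro i hi
    rw [map_natCast, ZMod.val_natCast, Nat.mod_eq_of_lt hi]
  have hE : E l = ringWord u 0 n := by
    suffices h0 : E l = ringWord u 0 l.length by rwa [← hn] at h0
    apply E_eq_ringWord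
    intro i hi
    simp only [u, v, zero_add]
    congr 1
    exact (hval i (hn ▸ hi)).symm
  rw [hE] at hne ⊢
  obtain ⟨QA, _, _, fA, hfA⟩ := exists_injOn hA
    (insert 1 ((l ++ y).map (Sum.elim id (fun _ => 1))).toFinset)
  obtain ⟨QB, _, _, fB, hfB⟩ := exists_injOn hB
    (insert 1 ((l ++ y).map (Sum.elim (fun _ => 1) id)).toFinset)
  have memA : ∀ a : A, (Sum.inl a ∈ l ∨ Sum.inl a ∈ y) →
      a ∈ (insert 1 ((l ++ y).map (Sum.elim id (fun _ => 1))).toFinset) := by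
    intro a ha
    refine Finset.mem_insert_of_mem (List.mem_toFinset.2 (List.mem_map.2 ⟨Sum.inl a, ?_, rfl⟩))
    simpa using ha
  have memB : ∀ a : B, (Sum.inr a ∈ l ∨ Sum.inr a ∈ y) →
      a ∈ (insert 1 ((l ++ y).map (Sum.elim (fun _ => 1) id)).toFinset) := by
    intro a ha
    refine Finset.mem_insert_of_mem (List.mem_toFinset.2 (List.mem_map.2 ⟨Sum.inr a, ?_, rfl⟩))
    simpa using ha
  let gA : A →* QA × QB := (MonoidHom.inl QA QB).comp fA
  let gB : B →* QA × QB := (MonoidHom.inr QA QB).comp fB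
  have iA : ∀ a a', gA a = gA a' → fA a = fA a' := fun a a' h => congrArg Prod.fst h
  have iB : ∀ a a', gB a = gB a' → fB a = fB a' := fun a a' h => congrArg Prod.snd h
  have hmem : ∀ j, u j ∈ l := fun j => hv _
  refine core1 (K := QA × QB) (fA := gA) (fB := gB) (u := u) ?_ rfl ?_ ?_ y ?_ (hn ▸ hy) hne
  · intro j hj
    obtain ⟨m, hm⟩ := hrot (ZMod.castHom (Dvd.intro_left 3 rfl) (ZMod n) j)
    have hm' := hm.head
    change u j ≠ _ ∧ u j ≠ _ at hm'
    have hj' := hmem j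
    rcases hu : u j with a | b
    · rw [hu] at hj hm' hj'
      have : a = 1 := hfA a (memA a (Or.inl hj')) 1 (by simp) (iA _ _ (by simpa using hj))
      exact hm'.1 (by rw [this])
    · rw [hu] at hj hm' hj'
      have : b = 1 := hfB b (memB b (Or.inl hj')) 1 (by simp) (iB _ _ (by simpa using hj))
      exact hm'.2 (by rw [this])
  · intro j
    simp only [u, map_add, map_natCast, CharP.cast_eq_zero, add_zero]
  · intro j
    obtain ⟨m, hm⟩ := hrot (ZMod.castHom (Dvd.intro_left 3 rfl) (ZMod n) j)
    have := hm.head2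
    simp only [u, map_add, map_one]
    exact this
  · intro s hs j h1 h2
    have hj' := hmem j
    rcases s with s | s <;> rcases hu : u j with a | b <;> rw [hu] at h1 h2 hj'
    · rw [hfA s (memA s (Or.inr hs)) a (memA a (Or.inl hj')) (iA _ _ h2)]
    · simp at h1
    · simp at h1
    · rw [hfB s (memB s (Or.inr hs)) b (memB b (Or.inl hj')) (iB _ _ h2)]

lemma short (l : List (A ⊕ B)) (h : l.length ≤ 1) :
    (∃ a, E l = Coprod.inl a) ∨ (∃ b, E l = Coprod.inr b) := by
  rcases l with _ | ⟨s | s, _ | ⟨t, l⟩⟩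
  · exact Or.inl ⟨1, by simp [E]⟩
  · exact Or.inl ⟨s, by simp [E, ltr]⟩
  · simp at h
  · exact Or.inr ⟨s, by simp [E, ltr]⟩
  · simp at h

lemma mixed (hA : ConjugacySeparable A) (hB : ConjugacySeparable B) (a : A) (b : B)
    (h : ¬ IsConj (Coprod.inl a : Coprod A B) (Coprod.inr b)) :
    Sep (Coprod.inl a : Coprod A B) (Coprod.inr b) := by
  by_cases ha : a = 1
  · refine Sep.of_map hB (Coprod.snd : Coprod A B →* B) ?_
    simp only [Coprod.snd_apply_inl, Coprod.snd_apply_inr]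
    intro h'
    have hb : b = 1 := isConj_one_right.1 h'
    exact h (by rw [ha, hb, map_one, map_one])
  · refine Sep.of_map hA (Coprod.fst : Coprod A B →* A) ?_
    simp only [Coprod.fst_apply_inl, Coprod.fst_apply_inr]
    intro h'
    exact ha (isConj_one_right.1 h'.symm)

lemma sep_of_not_conj (hA : ConjugacySeparable A) (hB : ConjugacySeparable B)
    (l m : List (A ⊕ B)) (hl : Mini l) (hm : Mini m)
    (hne : ¬ IsConj (E l) (E m)) : Sep (E l) (E m) := by
  by_cases h1 : l.length ≤ 1 ∧ m.length ≤ 1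
  · rcases short l h1.1 with ⟨a, ha⟩ | ⟨b, hb⟩ <;> rcases short m h1.2 with ⟨a', ha'⟩ | ⟨b', hb'⟩
    · rw [ha, ha'] at hne ⊢
      refine Sep.of_map hA (Coprod.fst : Coprod A B →* A) fun h => hne ?_
      simp only [Coprod.fst_apply_inl] at h
      exact (Coprod.inl : A →* Coprod A B).map_isConj h
    · rw [ha, hb'] at hne ⊢
      exact mixed hA hB _ _ hne
    · rw [hb, ha'] at hne ⊢
      exact (mixed hA hB _ _ fun h => hne h.symm).symm
    · rw [hb, hb'] at hne ⊢
      refine Sep.of_map hB (Coprod.snd : Coprod A B →* B) fun h => hne ?_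
      simp only [Coprod.snd_apply_inr] at h
      exact (Coprod.inr : B →* Coprod A B).map_isConj h
  · rcases le_total m.length l.length with h | h
    · exact core hA hB l m hl (by omega) h hne
    · exact (core hA hB m l hm (by omega) h fun h => hne h.symm).symm

end final

end FreeProdCS

/-- Stebe: the free product of conjugacy separable groups is conjugacy separable. -/
theorem conjugacySeparable_coprod (A B : Type u) [Group A] [Group B]
    (hA : ConjugacySeparable A) (hB : ConjugacySeparable B) :
    ConjugacySeparable (Monoid.Coprod A B) := by
  intro x y hxy
  obtain ⟨l, hxl, hl⟩ := FreeProdCS.exists_mini x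
  obtain ⟨m, hym, hm⟩ := FreeProdCS.exists_mini y
  have h := FreeProdCS.sep_of_not_conj hA hB l m hl hm
    fun h => hxy (hxl.trans (h.trans hym.symm))
  exact ((h.conj_left hxl).symm.conj_left hym).symm.exists
end
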